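/- There is a group epimorphism η₁ : SO(4) → SO(3) such that η₁ ∘ η_p = ε₂₃ and η₁ ∘ η_l = ε₁₂, where η_p(D(α)) = ε₃₄(D(α)) and η_l(D(α)) = ε₁₄(D(2α))·ε₂₃(D(−α)) are the point- and line-stabilizing embeddings of SO(2) into SO(4). -/

import Mathlib

open Matrix

/-- `A ∈ SO(n)`. -/
def isSO {n : ℕ} (A : Matrix (Fin n) (Fin n) ℝ) : Prop :=
  A * A.transpose = 1 ∧ A.det = 1

/-- The point-stabilizing embedding `η_p : SO(2) → SO(4)`, `D(α) ↦ ε₃₄(D(α))`. -/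
noncomputable def etaP (α : ℝ) : Matrix (Fin 4) (Fin 4) ℝ :=
  !![1, 0, 0, 0;
     0, 1, 0, 0;
     0, 0, Real.cos α, Real.sin α;
     0, 0, -Real.sin α, Real.cos α]

/-- The line-stabilizing embedding `η_l : SO(2) → SO(4)`,
`D(α) ↦ ε₁₄(D(2α))·ε₂₃(D(−α))`. -/
noncomputable def etaL (α : ℝ) : Matrix (Fin 4) (Fin 4) ℝ :=
  !![Real.cos (2 * α), 0, 0, Real.sin (2 * α);
     0, Real.cos α, -Real.sin α, 0;
     0, Real.sin α, Real.cos α, 0;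
     -Real.sin (2 * α), 0, 0, Real.cos (2 * α)]

/-- `ε₁₂(D(α)) ∈ SO(3)`: rotation in the first two coordinates. -/
noncomputable def eps12D (α : ℝ) : Matrix (Fin 3) (Fin 3) ℝ :=
  !![Real.cos α, Real.sin α, 0;
     -Real.sin α, Real.cos α, 0;
     0, 0, 1]

/-- `ε₂₃(D(α)) ∈ SO(3)`: rotation in the last two coordinates. -/
noncomputable def eps23D (α : ℝ) : Matrix (Fin 3) (Fin 3) ℝ :=
  !![1, 0, 0;
     0, Real.cos α, Real.sin α;
     0, -Real.sin α, Real.cos α]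

/-- The self-dual skew-symmetric `4 × 4` matrix with first row `(0, v)`; these matrices span the
imaginary quaternions acting on `ℝ⁴` on one side. -/
def selfDual (v : Fin 3 → ℝ) : Matrix (Fin 4) (Fin 4) ℝ :=
  !![0, v 0, v 1, v 2;
     -v 0, 0, v 2, -v 1;
     -v 1, -v 2, 0, v 0;
     -v 2, v 1, -v 0, 0]

/-- The Hodge star on skew-symmetric `4 × 4` matrices. -/
def hodgeStar (M : Matrix (Fin 4) (Fin 4) ℝ) : Matrix (Fin 4) (Fin 4) ℝ :=
  !![0, M 2 3, -M 1 3, M 1 2;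
     -M 2 3, 0, M 0 3, -M 0 2;
     M 1 3, -M 0 3, 0, M 0 1;
     -M 1 2, M 0 2, -M 0 1, 0]

/-- The last three entries of the first row. -/
def rowTail (M : Matrix (Fin 4) (Fin 4) ℝ) : Fin 3 → ℝ := ![M 0 1, M 0 2, M 0 3]

/-- The matrix of the action `M ↦ A M Aᵀ` on self-dual skew-symmetric matrices. -/
def selfDualRep (A : Matrix (Fin 4) (Fin 4) ℝ) : Matrix (Fin 3) (Fin 3) ℝ :=
  Matrix.of fun i j => rowTail (A * selfDual (Pi.single j 1) * Aᵀ) i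

theorem rowTail_selfDual (v : Fin 3 → ℝ) : rowTail (selfDual v) = v := by
  ext i; fin_cases i <;> simp [rowTail, selfDual]

theorem selfDual_injective : Function.Injective selfDual :=
  Function.LeftInverse.injective rowTail_selfDual

theorem selfDual_rowTail {M : Matrix (Fin 4) (Fin 4) ℝ} (h : hodgeStar M = M) :
    selfDual (rowTail M) = M := by
  have h' : ∀ i j, hodgeStar M i j = M i j := fun i j => by rw [h]
  have h00 := h' 0 0
  have h01 := h' 0 1
  have h02 := h' 0 2
  have h03 := h' 0 3
  have h10 := h' 1 0
  have h11 := h' 1 1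
  have h12 := h' 1 2
  have h13 := h' 1 3
  have h20 := h' 2 0
  have h21 := h' 2 1
  have h22 := h' 2 2
  have h23 := h' 2 3
  have h30 := h' 3 0
  have h31 := h' 3 1
  have h32 := h' 3 2
  have h33 := h' 3 3
  simp [hodgeStar] at *
  ext i j
  fin_cases i <;> fin_cases j <;> simp [selfDual, rowTail] <;> linarith

set_option maxHeartbeats 2000000 in
theorem transpose_mul_hodgeStar_mul (A : Matrix (Fin 4) (Fin 4) ℝ) (v : Fin 3 → ℝ) :
    Aᵀ * hodgeStar (A * selfDual v * Aᵀ) * A = A.det • selfDual v := by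
  ext i j
  fin_cases i <;> fin_cases j <;>
    simp [Matrix.mul_apply, Fin.sum_univ_succ, Matrix.det_succ_row_zero, hodgeStar, selfDual,
      Fin.succAbove] <;> ring

theorem isSO.transpose_mul_self {n : ℕ} {A : Matrix (Fin n) (Fin n) ℝ} (hA : isSO A) :
    Aᵀ * A = 1 :=
  mul_eq_one_comm.mp hA.1

theorem hodgeStar_conj {A : Matrix (Fin 4) (Fin 4) ℝ} (hA : isSO A) (v : Fin 3 → ℝ) :
    hodgeStar (A * selfDual v * Aᵀ) = A * selfDual v * Aᵀ := by
  have h := transpose_mul_hodgeStar_mul A v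
  rw [hA.2, one_smul] at h
  conv_rhs => rw [← h]
  simp only [← Matrix.mul_assoc, hA.1, one_mul]
  simp only [Matrix.mul_assoc, hA.1, mul_one]

theorem rowTail_conj (A : Matrix (Fin 4) (Fin 4) ℝ) (v : Fin 3 → ℝ) :
    rowTail (A * selfDual v * Aᵀ) = selfDualRep A *ᵥ v := by
  ext i
  fin_cases i <;>
    simp [rowTail, selfDualRep, Matrix.mulVec, dotProduct, Fin.sum_univ_succ, Matrix.mul_apply,
      selfDual, Pi.single_apply] <;> ring

theorem selfDual_mulVec {A : Matrix (Fin 4) (Fin 4) ℝ} (hA : isSO A) (v : Fin 3 → ℝ) :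
    selfDual (selfDualRep A *ᵥ v) = A * selfDual v * Aᵀ := by
  rw [← rowTail_conj, selfDual_rowTail (hodgeStar_conj hA v)]

theorem isSO.mul {n : ℕ} {A B : Matrix (Fin n) (Fin n) ℝ} (hA : isSO A) (hB : isSO B) :
    isSO (A * B) := by
  refine ⟨?_, by rw [Matrix.det_mul, hA.2, hB.2, one_mul]⟩
  rw [Matrix.transpose_mul, Matrix.mul_assoc, ← Matrix.mul_assoc B, hB.1, one_mul, hA.1]

theorem selfDualRep_mul {A B : Matrix (Fin 4) (Fin 4) ℝ} (hA : isSO A) (hB : isSO B) :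
    selfDualRep (A * B) = selfDualRep A * selfDualRep B := by
  refine Matrix.ext_iff_mulVec.mpr fun v => selfDual_injective ?_
  rw [← Matrix.mulVec_mulVec, selfDual_mulVec (hA.mul hB), selfDual_mulVec hA,
    selfDual_mulVec hB, Matrix.transpose_mul]
  simp only [Matrix.mul_assoc]

theorem trace_selfDual_mul (v w : Fin 3 → ℝ) :
    (selfDual v * selfDual w).trace = -4 * (v ⬝ᵥ w) := by
  simp [Matrix.trace, Fin.sum_univ_succ, selfDual, dotProduct]
  ring

theorem trace_selfDual_mul_mul (X : Matrix (Fin 3) (Fin 3) ℝ) :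
    (selfDual (X.col 0) * selfDual (X.col 1) * selfDual (X.col 2)).trace = 4 * X.det := by
  simp [Matrix.trace, Fin.sum_univ_succ, selfDual, Matrix.det_fin_three]
  ring

theorem conj_mul_conj {A : Matrix (Fin 4) (Fin 4) ℝ} (hA : isSO A)
    (M N : Matrix (Fin 4) (Fin 4) ℝ) : A * M * Aᵀ * (A * N * Aᵀ) = A * (M * N) * Aᵀ := by
  calc A * M * Aᵀ * (A * N * Aᵀ) = A * M * (Aᵀ * A) * N * Aᵀ := by
        simp only [Matrix.mul_assoc]
    _ = A * (M * N) * Aᵀ := by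
        rw [hA.transpose_mul_self, mul_one, Matrix.mul_assoc A]

theorem trace_conj {A : Matrix (Fin 4) (Fin 4) ℝ} (hA : isSO A)
    (M : Matrix (Fin 4) (Fin 4) ℝ) : (A * M * Aᵀ).trace = M.trace := by
  rw [Matrix.trace_mul_comm, ← Matrix.mul_assoc, hA.transpose_mul_self, one_mul]

theorem selfDual_col {A : Matrix (Fin 4) (Fin 4) ℝ} (hA : isSO A) (j : Fin 3) :
    selfDual ((selfDualRep A).col j) =
      A * selfDual ((1 : Matrix (Fin 3) (Fin 3) ℝ).col j) * Aᵀ := by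
  rw [← selfDual_mulVec hA, ← Matrix.mulVec_single_one, ← Matrix.mulVec_single_one,
    Matrix.one_mulVec]

theorem isSO_selfDualRep {A : Matrix (Fin 4) (Fin 4) ℝ} (hA : isSO A) :
    isSO (selfDualRep A) := by
  constructor
  · refine mul_eq_one_comm.mp ?_
    ext i j
    have h := trace_selfDual_mul ((selfDualRep A).col i) ((selfDualRep A).col j)
    rw [selfDual_col hA, selfDual_col hA, conj_mul_conj hA, trace_conj hA,
      trace_selfDual_mul] at h
    have h' := mul_left_cancel₀ (by norm_num) h
    rw [Matrix.mul_apply']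
    refine h'.symm.trans ?_
    change ((1 : Matrix (Fin 3) (Fin 3) ℝ)ᵀ * (1 : Matrix (Fin 3) (Fin 3) ℝ)) i j = _
    simp
  · have h := trace_selfDual_mul_mul (selfDualRep A)
    rw [selfDual_col hA, selfDual_col hA, selfDual_col hA, conj_mul_conj hA, conj_mul_conj hA,
      trace_conj hA, trace_selfDual_mul_mul, Matrix.det_one] at h
    linarith

/-- The block embedding of `3 × 3` matrices into the last three coordinates. -/
def blockOne (X : Matrix (Fin 3) (Fin 3) ℝ) : Matrix (Fin 4) (Fin 4) ℝ :=
  !![1, 0, 0, 0;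
     0, X 0 0, X 0 1, X 0 2;
     0, X 1 0, X 1 1, X 1 2;
     0, X 2 0, X 2 1, X 2 2]

theorem selfDualRep_blockOne (X : Matrix (Fin 3) (Fin 3) ℝ) : selfDualRep (blockOne X) = X := by
  ext i j
  fin_cases i <;> fin_cases j <;>
    simp [selfDualRep, rowTail, Matrix.mul_apply, Fin.sum_univ_succ, selfDual, blockOne]

theorem isSO_blockOne {X : Matrix (Fin 3) (Fin 3) ℝ} (hX : isSO X) : isSO (blockOne X) := by
  constructor
  · have h : ∀ i j, (X * Xᵀ) i j = (1 : Matrix (Fin 3) (Fin 3) ℝ) i j := fun i j => by rw [hX.1]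
    simp only [Matrix.mul_apply, Fin.sum_univ_three, Matrix.transpose_apply] at h
    ext i j
    fin_cases i <;> fin_cases j <;>
      simp [Matrix.mul_apply, Fin.sum_univ_four, blockOne, h]
  · rw [← hX.2, Matrix.det_fin_three]
    simp [Matrix.det_succ_row_zero, Fin.sum_univ_succ, blockOne, Fin.succAbove]
    ring

theorem selfDualRep_etaP (α : ℝ) : selfDualRep (etaP α) = eps23D α := by
  rw [← selfDualRep_blockOne (eps23D α)]
  congr 1

theorem selfDualRep_etaL (α : ℝ) : selfDualRep (etaL α) = eps12D α := by
  have hc : Real.cos α = Real.cos (2 * α) * Real.cos α + Real.sin (2 * α) * Real.sin α := by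
    rw [← Real.cos_sub]; ring_nf
  have hs : Real.sin α = Real.sin (2 * α) * Real.cos α - Real.cos (2 * α) * Real.sin α := by
    rw [← Real.sin_sub]; ring_nf
  have h2 := Real.sin_sq_add_cos_sq (2 * α)
  ext i j
  fin_cases i <;> fin_cases j <;>
    simp [selfDualRep, rowTail, Matrix.mul_apply, Fin.sum_univ_succ, selfDual, etaL, eps12D] <;>
    linarith

/-- There is a group epimorphism `η₁ : SO(4) → SO(3)` with `η₁ ∘ η_p = ε₂₃` and
`η₁ ∘ η_l = ε₁₂`. -/
theorem stmt19 :
    ∃ η : Matrix (Fin 4) (Fin 4) ℝ → Matrix (Fin 3) (Fin 3) ℝ,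
      (∀ A B : Matrix (Fin 4) (Fin 4) ℝ, isSO A → isSO B → η (A * B) = η A * η B) ∧
      (∀ A : Matrix (Fin 4) (Fin 4) ℝ, isSO A → isSO (η A)) ∧
      (∀ X : Matrix (Fin 3) (Fin 3) ℝ, isSO X → ∃ A, isSO A ∧ η A = X) ∧
      (∀ α : ℝ, η (etaP α) = eps23D α) ∧
      (∀ α : ℝ, η (etaL α) = eps12D α) := by
  exact ⟨selfDualRep, fun _ _ => selfDualRep_mul, fun _ => isSO_selfDualRep,
    fun X hX => ⟨blockOne X, isSO_blockOne hX, selfDualRep_blockOne X⟩,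
    selfDualRep_etaP, selfDualRep_etaL⟩
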